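/- arXiv:2510.25995 — 3 statements merged into one kernel-verified Lean document; each statement's English description precedes it below -/
import Mathlib

section
/- Let $V_1, V_2$ be nonzero finite-dimensional complex vector spaces and let $A_i \in \mathrm{End}_{\mathbf C}(V_i)$ for $i=1,2$ have minimal polynomials $b_i(s) = \prod_{\gamma \in \mathbf C} (s+\gamma)^{m^{(i)}_\gamma}$ (where $m^{(i)}_\gamma = 0$ for all but finitely many $\gamma$). Then the minimal polynomial of the endomorphism $A_1 \otimes \mathrm{id} + \mathrm{id} \otimes A_2$ of $V_1 \otimes_{\mathbf C} V_2$ is $\prod_{\gamma \in \mathbf C}(s+\gamma)^{m_\gamma}$, where $m_\gamma = \max\{\, m^{(1)}_\alpha + m^{(2)}_\beta - 1 \mid m^{(1)}_\alpha > 0,\ m^{(2)}_\beta > 0,\ \alpha + \beta = \gamma \,\}$ (and $m_\gamma = 0$ if no such pair $(\alpha,\beta)$ exists). -/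
open Polynomial
open scoped TensorProduct

lemma aux_kill {V : Type*} [AddCommGroup V] [Module ℂ V] [FiniteDimensional ℂ V]
    (A : Module.End ℂ V) (μ : ℂ) (k : ℕ) (v : V)
    (h : ((A - algebraMap ℂ _ μ) ^ k) v = 0) :
    ((A - algebraMap ℂ _ μ) ^ ((minpoly ℂ A).rootMultiplicity μ)) v = 0 := by
  have hne : minpoly ℂ A ≠ 0 := minpoly.ne_zero (Algebra.IsIntegral.isIntegral A)
  obtain ⟨q, hq, hnd⟩ := Polynomial.exists_eq_pow_rootMultiplicity_mul_and_not_dvd _ hne μ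
  set m := (minpoly ℂ A).rootMultiplicity μ with hm
  have hcop : IsCoprime ((X - C μ) ^ k) q := by
    apply IsCoprime.pow_left
    exact (Polynomial.irreducible_X_sub_C μ).coprime_iff_not_dvd.2 hnd
  obtain ⟨u, w, huw⟩ := hcop
  have haX : aeval A (X - C μ) = A - algebraMap ℂ _ μ := by simp
  have e : (X - C μ) ^ m = ((X - C μ) ^ m * u) * (X - C μ) ^ k + w * minpoly ℂ A := by
    rw [hq]; linear_combination (-(X - C μ) ^ m) * huw
  have e2 := congrArg (fun p => (aeval A p) v) e
  simpa [h] using e2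

lemma aux_exists {V : Type*} [AddCommGroup V] [Module ℂ V] [FiniteDimensional ℂ V]
    (A : Module.End ℂ V) (μ : ℂ) (h : 0 < (minpoly ℂ A).rootMultiplicity μ) :
    ∃ v, ((A - algebraMap ℂ _ μ) ^ ((minpoly ℂ A).rootMultiplicity μ)) v = 0 ∧
      ((A - algebraMap ℂ _ μ) ^ ((minpoly ℂ A).rootMultiplicity μ - 1)) v ≠ 0 := by
  have hne : minpoly ℂ A ≠ 0 := minpoly.ne_zero (Algebra.IsIntegral.isIntegral A)
  obtain ⟨q, hq, hnd⟩ := Polynomial.exists_eq_pow_rootMultiplicity_mul_and_not_dvd _ hne μ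
  set m := (minpoly ℂ A).rootMultiplicity μ with hm
  have haX : aeval A (X - C μ) = A - algebraMap ℂ _ μ := by simp
  by_contra! hcon
  have h0 : aeval A ((X - C μ) ^ (m - 1) * q) = 0 := by
    ext u
    have := hcon (aeval A q u) (by
      have e2 := congrArg (fun p => (aeval A p) u) hq
      simpa using e2.symm)
    simpa using this
  have hd := minpoly.dvd ℂ A h0
  have hq0 : q ≠ 0 := by rintro rfl; simp at hnd
  have hd2 : (X - C μ) ^ m ∣ (X - C μ) ^ (m - 1) * q :=
    (Dvd.intro _ hq.symm).trans hd
  obtain ⟨j, hj⟩ : ∃ j, m = j + 1 := ⟨m - 1, by omega⟩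
  rw [hj, pow_succ, Nat.add_sub_cancel] at hd2
  exact hnd ((mul_dvd_mul_iff_left (pow_ne_zero _ (X_sub_C_ne_zero μ))).1 hd2)

lemma aux_pow {V₁ V₂ : Type*} [AddCommGroup V₁] [AddCommGroup V₂]
    [Module ℂ V₁] [Module ℂ V₂]
    (A₁ : Module.End ℂ V₁) (A₂ : Module.End ℂ V₂) (a b : ℂ) (n : ℕ) (v₁ : V₁) (v₂ : V₂) :
    ((TensorProduct.map A₁ (LinearMap.id : V₂ →ₗ[ℂ] V₂)
        + TensorProduct.map (LinearMap.id : V₁ →ₗ[ℂ] V₁) A₂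
        - algebraMap ℂ (Module.End ℂ (V₁ ⊗[ℂ] V₂)) (a + b)) ^ n) (v₁ ⊗ₜ[ℂ] v₂) =
      ∑ i ∈ Finset.range (n + 1), n.choose i •
        ((((A₁ - algebraMap ℂ _ a) ^ i) v₁) ⊗ₜ[ℂ] (((A₂ - algebraMap ℂ _ b) ^ (n - i)) v₂)) := by
  set N₁ := A₁ - algebraMap ℂ (Module.End ℂ V₁) a
  set N₂ := A₂ - algebraMap ℂ (Module.End ℂ V₂) b
  have e : TensorProduct.map A₁ (LinearMap.id : V₂ →ₗ[ℂ] V₂)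
        + TensorProduct.map (LinearMap.id : V₁ →ₗ[ℂ] V₁) A₂
        - algebraMap ℂ (Module.End ℂ (V₁ ⊗[ℂ] V₂)) (a + b) =
      (TensorProduct.map N₁ LinearMap.id + TensorProduct.map LinearMap.id N₂ :
        Module.End ℂ (V₁ ⊗[ℂ] V₂)) := by
    apply TensorProduct.ext'
    intro x y
    simp only [N₁, N₂, LinearMap.sub_apply, LinearMap.add_apply, TensorProduct.map_tmul,
      LinearMap.id_apply, Module.algebraMap_end_apply, TensorProduct.sub_tmul,
      TensorProduct.tmul_sub, add_smul, TensorProduct.tmul_smul, TensorProduct.smul_tmul']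
    abel
  have hc : Commute (TensorProduct.map N₁ LinearMap.id : Module.End ℂ (V₁ ⊗[ℂ] V₂))
      (TensorProduct.map LinearMap.id N₂) := by
    apply TensorProduct.ext'
    intro x y
    simp
  have p1 : ∀ i x y, ((TensorProduct.map N₁ LinearMap.id : Module.End ℂ (V₁ ⊗[ℂ] V₂)) ^ i)
      (x ⊗ₜ[ℂ] y) = ((N₁ ^ i) x) ⊗ₜ[ℂ] y := by
    intro i
    induction i with
    | zero => simp
    | succ i ih => intro x y; simp [pow_succ]
  have p2 : ∀ i x y, ((TensorProduct.map LinearMap.id N₂ : Module.End ℂ (V₁ ⊗[ℂ] V₂)) ^ i)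
      (x ⊗ₜ[ℂ] y) = x ⊗ₜ[ℂ] ((N₂ ^ i) y) := by
    intro i
    induction i with
    | zero => simp
    | succ i ih => intro x y; simp [pow_succ]
  rw [e, hc.add_pow, LinearMap.sum_apply]
  refine Finset.sum_congr rfl fun i _ => ?_
  rw [← Nat.cast_comm, ← nsmul_eq_mul, LinearMap.smul_apply, Module.End.mul_apply, p2, p1]

lemma aux_decomp {V : Type*} [AddCommGroup V] [Module ℂ V] [FiniteDimensional ℂ V]
    (A : Module.End ℂ V) (S : Submodule ℂ V)
    (h : ∀ a v, ((A - algebraMap ℂ _ a) ^ ((minpoly ℂ A).rootMultiplicity a)) v = 0 → v ∈ S) :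
    S = ⊤ := by
  rw [eq_top_iff, ← Module.End.iSup_maxGenEigenspace_eq_top A, iSup_le_iff]
  intro a v hv
  rw [Module.End.mem_maxGenEigenspace] at hv
  obtain ⟨k, hk⟩ := hv
  apply h a
  apply aux_kill A a k
  rwa [Algebra.algebraMap_eq_smul_one]

lemma aux_zero {V₁ V₂ : Type*} [AddCommGroup V₁] [AddCommGroup V₂]
    [Module ℂ V₁] [Module ℂ V₂]
    (A₁ : Module.End ℂ V₁) (A₂ : Module.End ℂ V₂) (a b : ℂ) (k l n : ℕ) (v₁ : V₁) (v₂ : V₂)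
    (h₁ : ((A₁ - algebraMap ℂ _ a) ^ k) v₁ = 0) (h₂ : ((A₂ - algebraMap ℂ _ b) ^ l) v₂ = 0)
    (hn : k + l - 1 ≤ n) :
    ((TensorProduct.map A₁ (LinearMap.id : V₂ →ₗ[ℂ] V₂)
        + TensorProduct.map (LinearMap.id : V₁ →ₗ[ℂ] V₁) A₂
        - algebraMap ℂ (Module.End ℂ (V₁ ⊗[ℂ] V₂)) (a + b)) ^ n) (v₁ ⊗ₜ[ℂ] v₂) = 0 := by
  rw [aux_pow]
  refine Finset.sum_eq_zero fun i hi => ?_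
  rw [Finset.mem_range] at hi
  by_cases hik : k ≤ i
  · rw [Module.End.pow_map_zero_of_le hik h₁]; simp
  · rw [Module.End.pow_map_zero_of_le (show l ≤ n - i by omega) h₂]; simp

lemma aux_tmul {V₁ V₂ : Type*} [AddCommGroup V₁] [AddCommGroup V₂]
    [Module ℂ V₁] [Module ℂ V₂] (x : V₁) (y : V₂) (h : x ⊗ₜ[ℂ] y = 0) : x = 0 ∨ y = 0 := by
  by_contra! hcon
  apply hcon.1
  rw [← Module.forall_dual_apply_eq_zero_iff ℂ]
  intro f
  by_contra hf
  apply hcon.2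
  rw [← Module.forall_dual_apply_eq_zero_iff ℂ]
  intro g
  have e := congrArg (fun z => LinearMap.mul' ℂ ℂ (TensorProduct.map f g z)) h
  simp only [TensorProduct.map_tmul, LinearMap.mul'_apply, map_zero] at e
  exact (mul_eq_zero.1 e).resolve_left hf

theorem stmt_0
    (V₁ V₂ : Type*) [AddCommGroup V₁] [AddCommGroup V₂]
    [Module ℂ V₁] [Module ℂ V₂]
    [FiniteDimensional ℂ V₁] [FiniteDimensional ℂ V₂]
    [Nontrivial V₁] [Nontrivial V₂]
    (A₁ : Module.End ℂ V₁) (A₂ : Module.End ℂ V₂)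
    (m₁ m₂ : ℂ → ℕ)
    (hm₁ : ∀ γ : ℂ, m₁ γ = (minpoly ℂ A₁).rootMultiplicity (-γ))
    (hm₂ : ∀ γ : ℂ, m₂ γ = (minpoly ℂ A₂).rootMultiplicity (-γ))
    (T : Module.End ℂ (V₁ ⊗[ℂ] V₂))
    (hT : T = TensorProduct.map A₁ (LinearMap.id : V₂ →ₗ[ℂ] V₂)
        + TensorProduct.map (LinearMap.id : V₁ →ₗ[ℂ] V₁) A₂) :
    ∀ γ : ℂ, (minpoly ℂ T).rootMultiplicity (-γ) =
      sSup ((fun p : ℂ × ℂ => m₁ p.1 + m₂ p.2 - 1) ''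
        {p : ℂ × ℂ | p.1 + p.2 = γ ∧ 0 < m₁ p.1 ∧ 0 < m₂ p.2}) := by
  classical
  intro γ
  have hne₁ : minpoly ℂ A₁ ≠ 0 := minpoly.ne_zero (Algebra.IsIntegral.isIntegral A₁)
  have hne₂ : minpoly ℂ A₂ ≠ 0 := minpoly.ne_zero (Algebra.IsIntegral.isIntegral A₂)
  have hneT : minpoly ℂ T ≠ 0 := minpoly.ne_zero (Algebra.IsIntegral.isIntegral T)
  -- every element of the set is a lower bound of the multiplicity
  have hlow : ∀ x ∈ ((fun p : ℂ × ℂ => m₁ p.1 + m₂ p.2 - 1) ''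
        {p : ℂ × ℂ | p.1 + p.2 = γ ∧ 0 < m₁ p.1 ∧ 0 < m₂ p.2}),
        x ≤ (minpoly ℂ T).rootMultiplicity (-γ) := by
    rintro x ⟨⟨a, b⟩, ⟨hab, ha, hb⟩, rfl⟩
    dsimp only at hab ha hb ⊢
    rw [hm₁] at ha
    rw [hm₂] at hb
    obtain ⟨v₁, hv₁, hv₁'⟩ := aux_exists A₁ (-a) ha
    obtain ⟨v₂, hv₂, hv₂'⟩ := aux_exists A₂ (-b) hb
    rw [← hm₁] at ha hv₁ hv₁'
    rw [← hm₂] at hb hv₂ hv₂'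
    have hg : -γ = -a + -b := by rw [← hab]; ring
    have hz := aux_zero A₁ A₂ (-a) (-b) _ _ _ v₁ v₂ hv₁ hv₂ le_rfl
    rw [← hg, ← hT] at hz
    have hk := aux_kill T (-γ) _ _ hz
    by_contra! hlt
    have hk2 := Module.End.pow_map_zero_of_le
      (show (minpoly ℂ T).rootMultiplicity (-γ) ≤ (m₁ a - 1) + (m₂ b - 1) by omega) hk
    rw [hg, hT, aux_pow, Finset.sum_eq_single (m₁ a - 1)] at hk2
    · rw [Nat.add_sub_cancel_left, ← Nat.cast_smul_eq_nsmul ℂ, smul_eq_zero] at hk2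
      rcases hk2 with h | h
      · have := Nat.choose_pos (Nat.le_add_right (m₁ a - 1) (m₂ b - 1))
        have h' : (m₁ a - 1 + (m₂ b - 1)).choose (m₁ a - 1) = 0 := by exact_mod_cast h
        omega
      · rcases aux_tmul _ _ h with h | h
        · exact hv₁' h
        · exact hv₂' h
    · intro i hi hi'
      rw [Finset.mem_range] at hi
      by_cases hik : m₁ a ≤ i
      · rw [Module.End.pow_map_zero_of_le hik hv₁]; simp
      · rw [Module.End.pow_map_zero_of_le
          (show m₂ b ≤ m₁ a - 1 + (m₂ b - 1) - i by omega) hv₂]; simp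
    · intro h
      simp at h
  have hbdd : BddAbove ((fun p : ℂ × ℂ => m₁ p.1 + m₂ p.2 - 1) ''
        {p : ℂ × ℂ | p.1 + p.2 = γ ∧ 0 < m₁ p.1 ∧ 0 < m₂ p.2}) := ⟨_, hlow⟩
  refine le_antisymm ?_ (csSup_le' hlow)
  set M := sSup ((fun p : ℂ × ℂ => m₁ p.1 + m₂ p.2 - 1) ''
        {p : ℂ × ℂ | p.1 + p.2 = γ ∧ 0 < m₁ p.1 ∧ 0 < m₂ p.2}) with hM
  set R := ((minpoly ℂ A₁).roots.toFinset ×ˢ (minpoly ℂ A₂).roots.toFinset).filter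
    (fun p => p.1 + p.2 ≠ -γ) with hR
  set P : ℂ[X] := ∏ p ∈ R, (X - C (p.1 + p.2)) ^
    ((minpoly ℂ A₁).rootMultiplicity p.1 + (minpoly ℂ A₂).rootMultiplicity p.2 - 1) with hP
  have hP0 : P.eval (-γ) ≠ 0 := by
    rw [hP, eval_prod, Finset.prod_ne_zero_iff]
    intro p hp
    rw [hR, Finset.mem_filter] at hp
    simp only [eval_pow, eval_sub, eval_X, eval_C]
    exact pow_ne_zero _ (sub_ne_zero.2 hp.2.symm)
  have haX : ∀ μ, aeval T (X - C μ) = T - algebraMap ℂ _ μ := by simp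
  have hpure : ∀ a b v₁ v₂,
      ((A₁ - algebraMap ℂ _ a) ^ ((minpoly ℂ A₁).rootMultiplicity a)) v₁ = 0 →
      ((A₂ - algebraMap ℂ _ b) ^ ((minpoly ℂ A₂).rootMultiplicity b)) v₂ = 0 →
      aeval T ((X - C (-γ)) ^ M * P) (v₁ ⊗ₜ[ℂ] v₂) = 0 := by
    intro a b v₁ v₂ h₁ h₂
    rcases Nat.eq_zero_or_pos ((minpoly ℂ A₁).rootMultiplicity a) with ha | ha
    · rw [ha] at h₁
      have : v₁ = 0 := by simpa using h₁
      simp [this]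
    rcases Nat.eq_zero_or_pos ((minpoly ℂ A₂).rootMultiplicity b) with hb | hb
    · rw [hb] at h₂
      have : v₂ = 0 := by simpa using h₂
      simp [this]
    have hd : (X - C (a + b)) ^ ((minpoly ℂ A₁).rootMultiplicity a +
        (minpoly ℂ A₂).rootMultiplicity b - 1) ∣ (X - C (-γ)) ^ M * P := by
      by_cases hab : a + b = -γ
      · rw [hab]
        refine Dvd.dvd.mul_right (pow_dvd_pow _ ?_) _
        refine le_csSup hbdd ⟨(-a, -b), ⟨?_, ?_, ?_⟩, ?_⟩
        · dsimp only
          linear_combination -hab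
        · simpa [hm₁] using ha
        · simpa [hm₂] using hb
        · simp [hm₁, hm₂]
      · refine Dvd.dvd.mul_left ?_ _
        refine Finset.dvd_prod_of_mem (fun p : ℂ × ℂ => (X - C (p.1 + p.2)) ^
          ((minpoly ℂ A₁).rootMultiplicity p.1 + (minpoly ℂ A₂).rootMultiplicity p.2 - 1))
          (a := (a, b)) ?_
        rw [hR, Finset.mem_filter, Finset.mem_product, Multiset.mem_toFinset,
          Multiset.mem_toFinset, mem_roots hne₁, mem_roots hne₂]
        exact ⟨⟨(rootMultiplicity_pos hne₁).1 ha, (rootMultiplicity_pos hne₂).1 hb⟩, hab⟩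
    obtain ⟨Q, hQ⟩ := hd
    rw [hQ, mul_comm, map_mul, Module.End.mul_apply, map_pow, haX, hT,
      aux_zero A₁ A₂ a b _ _ _ v₁ v₂ h₁ h₂ le_rfl, map_zero]
  have hall : aeval T ((X - C (-γ)) ^ M * P) = 0 := by
    set F := aeval T ((X - C (-γ)) ^ M * P) with hF
    apply TensorProduct.ext'
    intro x y
    have s1 : ∀ b v₂, ((A₂ - algebraMap ℂ _ b) ^ ((minpoly ℂ A₂).rootMultiplicity b)) v₂ = 0 →
        ∀ x, F (x ⊗ₜ[ℂ] v₂) = 0 := by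
      intro b v₂ h₂ x
      have := aux_decomp A₁ (LinearMap.ker (F ∘ₗ (TensorProduct.mk ℂ V₁ V₂).flip v₂))
        (fun a v₁ h₁ => by simpa using hpure a b v₁ v₂ h₁ h₂)
      have hx : x ∈ LinearMap.ker (F ∘ₗ (TensorProduct.mk ℂ V₁ V₂).flip v₂) := by
        rw [this]; trivial
      simpa using hx
    have := aux_decomp A₂ (LinearMap.ker (F ∘ₗ TensorProduct.mk ℂ V₁ V₂ x))
        (fun b v₂ h₂ => by simpa using s1 b v₂ h₂ x)
    have hy : y ∈ LinearMap.ker (F ∘ₗ TensorProduct.mk ℂ V₁ V₂ x) := by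
      rw [this]; trivial
    simpa using hy
  have hdv := minpoly.dvd ℂ T hall
  have hPne : P ≠ 0 := by rintro h; rw [h] at hP0; simp at hP0
  have hne : (X - C (-γ)) ^ M * P ≠ 0 :=
    mul_ne_zero (pow_ne_zero _ (X_sub_C_ne_zero _)) hPne
  refine (rootMultiplicity_le_rootMultiplicity_of_dvd hne hdv (-γ)).trans ?_
  rw [rootMultiplicity_mul hne, rootMultiplicity_X_sub_C_pow, rootMultiplicity_eq_zero hP0]
  simp
end

section
/- Let $K = \mathbf C(x,y,z)$ be the fraction field of $\mathbf C[x,y,z]$, with $\partial_x, \partial_y, \partial_z$ the unique derivations of $K$ extending the partial derivatives on polynomials, and let $g = x^2+y^2+z^2$. Then in $K$ one has the Bernstein–Sato-type functional equation $(x\partial_x)\big((x\partial_x)(1/g)\big) = -x\Big(\partial_y\big(\partial_y(x/g)\big) + \partial_z\big(\partial_z(x/g)\big)\Big)$. -/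
open MvPolynomial

/-- In `K = ℂ(x,y,z)` with `g = x² + y² + z²`, the Bernstein–Sato-type functional
equation `(x∂ₓ)((x∂ₓ)(1/g)) = -x (∂y(∂y(x/g)) + ∂z(∂z(x/g)))` holds. -/
theorem stmt_5
    (K : Type*) [Field K] [Algebra ℂ K]
    [Algebra (MvPolynomial (Fin 3) ℂ) K]
    [IsScalarTower ℂ (MvPolynomial (Fin 3) ℂ) K]
    [IsFractionRing (MvPolynomial (Fin 3) ℂ) K]
    (dx dy dz : Derivation ℂ K K)
    (hdx : ∀ p : MvPolynomial (Fin 3) ℂ,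
      dx (algebraMap (MvPolynomial (Fin 3) ℂ) K p) =
        algebraMap (MvPolynomial (Fin 3) ℂ) K (pderiv 0 p))
    (hdy : ∀ p : MvPolynomial (Fin 3) ℂ,
      dy (algebraMap (MvPolynomial (Fin 3) ℂ) K p) =
        algebraMap (MvPolynomial (Fin 3) ℂ) K (pderiv 1 p))
    (hdz : ∀ p : MvPolynomial (Fin 3) ℂ,
      dz (algebraMap (MvPolynomial (Fin 3) ℂ) K p) =
        algebraMap (MvPolynomial (Fin 3) ℂ) K (pderiv 2 p))
    (x y z g : K)
    (hx : x = algebraMap (MvPolynomial (Fin 3) ℂ) K (X 0))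
    (hy : y = algebraMap (MvPolynomial (Fin 3) ℂ) K (X 1))
    (hz : z = algebraMap (MvPolynomial (Fin 3) ℂ) K (X 2))
    (hg : g = x ^ 2 + y ^ 2 + z ^ 2) :
    x * dx (x * dx (1 / g)) = -x * (dy (dy (x / g)) + dz (dz (x / g))) := by
  have hg0 : g ≠ 0 := by
    have hgp : g = algebraMap (MvPolynomial (Fin 3) ℂ) K (X 0 ^ 2 + X 1 ^ 2 + X 2 ^ 2) := by
      rw [hg, hx, hy, hz]; simp only [map_add, map_pow]
    rw [hgp]
    intro h
    have h1 := (IsFractionRing.injective (MvPolynomial (Fin 3) ℂ) K) (h.trans (map_zero _).symm)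
    have h2 := congrArg (MvPolynomial.eval (fun i : Fin 3 => if i = 0 then (1 : ℂ) else 0)) h1
    simp at h2
  have xx : dx x = 1 := by rw [hx, hdx]; simp
  have xy : dx y = 0 := by rw [hy, hdx]; simp [pderiv_X]
  have xz : dx z = 0 := by rw [hz, hdx]; simp [pderiv_X]
  have yx : dy x = 0 := by rw [hx, hdy]; simp [pderiv_X]
  have yy : dy y = 1 := by rw [hy, hdy]; simp
  have yz : dy z = 0 := by rw [hz, hdy]; simp [pderiv_X]
  have zx : dz x = 0 := by rw [hx, hdz]; simp [pderiv_X]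
  have zy : dz y = 0 := by rw [hy, hdz]; simp [pderiv_X]
  have zz : dz z = 1 := by rw [hz, hdz]; simp
  obtain ⟨u, hu⟩ : ∃ u, u = g⁻¹ := ⟨_, rfl⟩
  have hug : u * g = 1 := by rw [hu]; exact inv_mul_cancel₀ hg0
  have L : ∀ (D : Derivation ℂ K K) (a b : K), D (a * b) = a * D b + b * D a := by
    intro D a b; simp [Derivation.leibniz]
  have hg' : g = x * x + y * y + z * z := by rw [hg]; ring
  have inv : ∀ D : Derivation ℂ K K, D u = -(u * u * D g) := by
    intro D
    have h := congrArg D hug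
    rw [L, Derivation.map_one_eq_zero] at h
    linear_combination u * h - D u * hug
  have ux : dx u = -(u * u * (x + x)) := by
    rw [inv, hg']; simp only [map_add, L, xx, xy, xz]; ring
  have uy : dy u = -(u * u * (y + y)) := by
    rw [inv, hg']; simp only [map_add, L, yx, yy, yz]; ring
  have uz : dz u = -(u * u * (z + z)) := by
    rw [inv, hg']; simp only [map_add, L, zx, zy, zz]; ring
  rw [one_div, div_eq_mul_inv, ← hu]
  simp only [L, map_add, map_neg, ux, uy, uz, xx, yx, yy, zx, zz, mul_zero, add_zero]
  rw [hg] at hug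
  linear_combination (8 * x ^ 2 * u ^ 2) * hug
end

section
/- Let $n \geq 3$, let $K = \mathbf C(x_1,\dots,x_n)$ be the fraction field of $\mathbf C[x_1,\dots,x_n]$, with $\partial_{x_i}$ the unique derivation of $K$ extending the $i$-th partial derivative on polynomials, and let $g = x_1^2 + \cdots + x_n^2$. Then in $K$ one has the Bernstein–Sato-type functional equation $(x_1\partial_{x_1})\Big((x_1\partial_{x_1})(1/g) - (n-3)(1/g)\Big) = -x_1 \sum_{j=2}^{n} \partial_{x_j}\big(\partial_{x_j}(x_1/g)\big)$. -/
open MvPolynomial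

/-- In `K = ℂ(x₁,…,xₙ)` (`n ≥ 3`) with `g = x₁² + ⋯ + xₙ²`, the
Bernstein–Sato-type functional equation
`(x₁∂₁)((x₁∂₁)(1/g) - (n-3)(1/g)) = -x₁ ∑_{j=2}^{n} ∂ⱼ(∂ⱼ(x₁/g))` holds.
Here `i₀` is the index of `x₁`. -/
theorem stmt_8
    (n : ℕ) (hn : 3 ≤ n)
    (K : Type*) [Field K] [Algebra ℂ K]
    [Algebra (MvPolynomial (Fin n) ℂ) K]
    [IsScalarTower ℂ (MvPolynomial (Fin n) ℂ) K]
    [IsFractionRing (MvPolynomial (Fin n) ℂ) K]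
    (D : Fin n → Derivation ℂ K K)
    (hD : ∀ (i : Fin n) (p : MvPolynomial (Fin n) ℂ),
      D i (algebraMap (MvPolynomial (Fin n) ℂ) K p) =
        algebraMap (MvPolynomial (Fin n) ℂ) K (pderiv i p))
    (x : Fin n → K)
    (hx : ∀ i, x i = algebraMap (MvPolynomial (Fin n) ℂ) K (X i))
    (g : K) (hg : g = ∑ i, x i ^ 2)
    (i₀ : Fin n) (hi₀ : (i₀ : ℕ) = 0) :
    x i₀ * D i₀ (x i₀ * D i₀ (1 / g) - ((n : K) - 3) * (1 / g)) =
      -x i₀ * ∑ j ∈ Finset.univ.erase i₀, D j (D j (x i₀ / g)) := by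
  have hxx : ∀ i j, D i (x j) = if i = j then 1 else 0 := by
    intro i j
    rw [hx, hD, pderiv_X]
    by_cases h : i = j
    · subst h; simp
    · simp [h, Pi.single_apply, Ne.symm h]
  have hDg : ∀ i, D i g = 2 * x i := by
    intro i
    rw [hg, map_sum]
    simp only [Derivation.leibniz_pow, hxx, smul_eq_mul, nsmul_eq_mul]
    simp
  obtain ⟨h, hh⟩ : ∃ h, h = g⁻¹ := ⟨_, rfl⟩
  have hDh : ∀ i, D i h = -2 * x i * h ^ 2 := by
    intro i
    rw [hh, Derivation.leibniz_inv, hDg, smul_eq_mul]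
    ring
  have hgh : h ^ 3 * g = h ^ 2 := by
    rw [hh]
    by_cases h0 : g = 0
    · simp [h0]
    · field_simp
  have hn0 : ∀ i, D i (n : K) = 0 := fun i => Derivation.map_natCast (D i) n
  have h3 : ∀ i, D i (3 : K) = 0 := fun i => by
    exact_mod_cast Derivation.map_natCast (D i) 3
  have h2 : ∀ i, D i (2 : K) = 0 := fun i => by
    exact_mod_cast Derivation.map_natCast (D i) 2
  have key : ∀ j ∈ Finset.univ.erase i₀, D j (D j (x i₀ / g)) =
      -2 * x i₀ * h ^ 2 + 8 * x i₀ * h ^ 3 * x j ^ 2 := by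
    intro j hj
    have hne : j ≠ i₀ := Finset.ne_of_mem_erase hj
    rw [div_eq_mul_inv, ← hh]
    simp only [Derivation.leibniz, Derivation.leibniz_pow, hDh, hxx, hne, if_false, if_true,
      map_neg, h2, smul_eq_mul, nsmul_eq_mul, smul_zero, add_zero, mul_zero]
    push_cast
    ring
  rw [Finset.sum_congr rfl key, Finset.sum_add_distrib, Finset.sum_const,
    Finset.card_erase_of_mem (Finset.mem_univ _), Finset.card_univ, Fintype.card_fin,
    nsmul_eq_mul, Nat.cast_sub (by omega : 1 ≤ n)]
  have hs : ∑ j ∈ Finset.univ.erase i₀, x j ^ 2 = g - x i₀ ^ 2 := by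
    rw [hg, ← Finset.add_sum_erase _ _ (Finset.mem_univ i₀)]
    ring
  rw [← Finset.mul_sum, hs, one_div, ← hh]
  simp only [Derivation.leibniz, Derivation.leibniz_pow, hDh, hxx, if_true, map_sub,
      map_neg, h2, h3, hn0, smul_eq_mul, nsmul_eq_mul, smul_zero, add_zero, mul_zero]
  push_cast
  linear_combination (8 * x i₀ ^ 2) * hgh
end
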